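/- For every α ∈ (0,1), every β > 0, every C > 0, every C' > 0, every P ∈ Σ(α,β,C,C'), every n ≥ 1 and every 1 ≤ k ≤ n, one has E_P(C_{n,k}) ≤ 2 n^α L_α(P) · (Γ(k−α)/Γ(k)) · ( 1 + 3C' Γ(k−α+β)/(Γ(k−α) n^β) ). -/

import Mathlib

open MeasureTheory ProbabilityTheory Real Filter
noncomputable section

/-- The law of an i.i.d. sample of size `n` from the discrete distribution `P` on `ℕ`. -/
def sampleMeasure (P : PMF ℕ) (n : ℕ) : Measure (Fin n → ℕ) :=
  Measure.pi fun _ => P.toMeasure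

/-- The probability mass of symbol `j` under `P`, as a real number. -/
def pReal (P : PMF ℕ) (j : ℕ) : ℝ := (P j).toReal

/-- Empirical frequency of the symbol `j` in the sample `ω`. -/
def freq {n : ℕ} (ω : Fin n → ℕ) (j : ℕ) : ℕ :=
  (Finset.univ.filter fun i => ω i = j).card

/-- `C_{n,k}`: the number of distinct symbols appearing at least `k` times in the sample. -/
def Ccount {n : ℕ} (ω : Fin n → ℕ) (k : ℕ) : ℝ :=
  ∑' j, if k ≤ freq ω j then 1 else 0

/-- The tail function `F̄_P(x) = #{j : p_j > x}`. -/
def tailF (P : PMF ℕ) (x : ℝ) : ℕ := Set.ncard {j | x < pReal P j}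

/-- `P ∈ Σ(α,β,C,C')` with `Lα = L_α(P) = lim_{x→0} x^α F̄_P(x)`. -/
def inSigmaClass (α β C C' : ℝ) (P : PMF ℕ) (Lα : ℝ) : Prop :=
  Tendsto (fun x => x ^ α * (tailF P x : ℝ)) (nhdsWithin 0 (Set.Ioi 0)) (nhds Lα) ∧
  C ≤ Lα ∧
  ∀ x ∈ Set.Ioo (0 : ℝ) 1,
    x ^ (-β) * |(tailF P x : ℝ) / (Lα * x ^ (-α)) - 1| ≤ C'

/-!
Let `p_j` be the masses of `P`. Then `E C_{n,k} = ∑_j Pr(Bin(n, p_j) ≥ k)`. The derivative of the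
binomial tail in the success probability telescopes to the density of `Beta(k, n - k + 1)`, so the
`j`-th term is the mass this law gives to `(0, p_j)`, and summing over `j` yields
`E C_{n,k} = E F̄_P(X)` with `X ∼ Beta(k, n - k + 1)`. The second-order condition bounds
`F̄_P(x)` by `L (x^{-α} + C' x^{β - α})`, which leaves two moments of `X`. Each is a product of two
quotients of Gamma values; the one comparing `Γ(n + 1)` with `Γ(n + 1 + s)` is at most `2 n^{-s}`
for `s > -1` because `Γ` is log-convex.
-/

lemma log_Gamma_add_one {x : ℝ} (hx : 0 < x) :
    log (Gamma (x + 1)) = log x + log (Gamma x) := by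
  rw [Gamma_add_one hx.ne', log_mul hx.ne' (Gamma_pos_of_pos hx).ne']

lemma Gamma_add_le_rpow_mul_Gamma {x s : ℝ} (hx : 0 < x) (hs0 : 0 ≤ s) (hs1 : s ≤ 1) :
    Gamma (x + s) ≤ x ^ s * Gamma x := by
  have hΓ : 0 < Gamma x := Gamma_pos_of_pos hx
  have hconv := convexOn_log_Gamma.2 (Set.mem_Ioi.2 hx) (Set.mem_Ioi.2 (by linarith : 0 < x + 1))
    (sub_nonneg.2 hs1) hs0 (sub_add_cancel 1 s)
  simp only [Function.comp_apply, smul_eq_mul, log_Gamma_add_one hx] at hconv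
  rw [show (1 - s) * x + s * (x + 1) = x + s by ring] at hconv
  rw [← log_le_log_iff (Gamma_pos_of_pos (by linarith)) (by positivity),
    log_mul (by positivity) hΓ.ne', log_rpow hx]
  linarith

lemma rpow_mul_Gamma_add_one_le {x s : ℝ} (hx : 0 < x) (hs : 0 ≤ s) :
    x ^ s * Gamma (x + 1) ≤ Gamma (x + 1 + s) := by
  have hΓ : 0 < Gamma (x + 1) := Gamma_pos_of_pos (by linarith)
  -- `x + 1` is the convex combination of `x` and `x + 1 + s` with weights `s/(1+s)` and `1/(1+s)`.
  have hconv := convexOn_log_Gamma.2 (Set.mem_Ioi.2 hx)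
    (Set.mem_Ioi.2 (by linarith : 0 < x + 1 + s)) (by positivity : 0 ≤ s / (1 + s))
    (by positivity : 0 ≤ 1 / (1 + s)) (by field_simp; ring)
  simp only [Function.comp_apply, smul_eq_mul] at hconv
  rw [show s / (1 + s) * x + 1 / (1 + s) * (x + 1 + s) = x + 1 by field_simp; ring,
    ← mul_le_mul_iff_right₀ (by positivity : 0 < 1 + s), mul_add, ← mul_assoc, ← mul_assoc,
    mul_div_cancel₀ _ (by positivity), mul_one_div_cancel (by positivity), one_mul] at hconv
  rw [← log_le_log_iff (by positivity) (Gamma_pos_of_pos (by linarith)),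
    log_mul (by positivity) hΓ.ne', log_rpow hx]
  linarith [congrArg (s * ·) (log_Gamma_add_one hx)]

lemma rpow_mul_Gamma_add_one_le_two_mul {x s : ℝ} (hx : 1 ≤ x) (hs : -1 < s) :
    x ^ s * Gamma (x + 1) ≤ 2 * Gamma (x + 1 + s) := by
  have hx0 : 0 < x := by linarith
  have hΓ : 0 < Gamma (x + 1 + s) := Gamma_pos_of_pos (by linarith)
  rcases le_total 0 s with h | h
  · linarith [rpow_mul_Gamma_add_one_le hx0 h]
  · have hbase : 0 < x + 1 + s := by linarith
    have hpow : (x + 1 + s) ^ (-s) ≤ 2 * x ^ (-s) := calc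
      (x + 1 + s) ^ (-s) ≤ (2 * x) ^ (-s) :=
        rpow_le_rpow hbase.le (by linarith) (by linarith)
      _ = 2 ^ (-s) * x ^ (-s) := mul_rpow zero_le_two hx0.le
      _ ≤ 2 * x ^ (-s) := by
        gcongr
        exact rpow_le_self_of_one_le one_le_two (by linarith)
    calc x ^ s * Gamma (x + 1)
        = x ^ s * Gamma (x + 1 + s + -s) := by ring_nf
      _ ≤ x ^ s * ((x + 1 + s) ^ (-s) * Gamma (x + 1 + s)) := by
        gcongr
        exact Gamma_add_le_rpow_mul_Gamma hbase (by linarith) (by linarith)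
      _ ≤ x ^ s * (2 * x ^ (-s) * Gamma (x + 1 + s)) := by gcongr
      _ = 2 * Gamma (x + 1 + s) := by rw [rpow_neg hx0.le]; field_simp

lemma beta_add_div_beta_le {a b s : ℝ} (ha : 0 < a) (hb : 0 < b) (hab : 2 ≤ a + b)
    (has : 0 < a + s) (hs : -1 < s) :
    beta (a + s) b / beta a b ≤ 2 * (Gamma (a + s) / Gamma a) * (a + b - 1) ^ (-s) := by
  have hΓasb := Gamma_pos_of_pos (add_pos has hb)
  have hx : 0 < a + b - 1 := by linarith
  have hGamma : Gamma (a + b) / Gamma (a + s + b) ≤ 2 * (a + b - 1) ^ (-s) := by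
    have h := rpow_mul_Gamma_add_one_le_two_mul (by linarith : 1 ≤ a + b - 1) hs
    rw [sub_add_cancel, add_right_comm] at h
    rw [div_le_iff₀ hΓasb, rpow_neg hx.le]
    field_simp
    linarith
  calc beta (a + s) b / beta a b
      = Gamma (a + s) / Gamma a * (Gamma (a + b) / Gamma (a + s + b)) := by
        unfold beta; field_simp
    _ ≤ Gamma (a + s) / Gamma a * (2 * (a + b - 1) ^ (-s)) := by gcongr
    _ = _ := by ring

lemma measurable_betaPDF (a b : ℝ) : Measurable (betaPDF a b) :=
  (measurable_betaPDFReal a b).ennreal_ofReal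

lemma lintegral_betaMeasure {f : ℝ → ENNReal} (hf : Measurable f) (a b : ℝ) :
    ∫⁻ x, f x ∂betaMeasure a b = ∫⁻ x, betaPDF a b x * f x :=
  lintegral_withDensity_eq_lintegral_mul _ (measurable_betaPDF a b) hf

lemma ae_betaMeasure_mem_Ioo (a b : ℝ) : ∀ᵐ x ∂betaMeasure a b, x ∈ Set.Ioo 0 1 := by
  rw [betaMeasure, ae_withDensity_iff (measurable_betaPDF a b)]
  refine ae_of_all _ fun x hx => ?_
  contrapose! hx
  rw [betaPDF, betaPDFReal, if_neg (show ¬(0 < x ∧ x < 1) from hx), ENNReal.ofReal_zero]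

lemma rpow_mul_betaPDFReal {a b s x : ℝ} (ha : 0 < a) (hb : 0 < b) (has : 0 < a + s) :
    x ^ s * betaPDFReal a b x = beta (a + s) b / beta a b * betaPDFReal (a + s) b x := by
  have hab := beta_pos ha hb
  have hasb := beta_pos has hb
  by_cases hx : 0 < x ∧ x < 1
  · simp only [betaPDFReal, if_pos hx]
    rw [show a + s - 1 = s + (a - 1) by ring, rpow_add hx.1]
    field_simp
  · simp only [betaPDFReal, if_neg hx, mul_zero]

lemma lintegral_rpow_betaMeasure {a b s : ℝ} (ha : 0 < a) (hb : 0 < b) (has : 0 < a + s) :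
    ∫⁻ x, ENNReal.ofReal (x ^ s) ∂betaMeasure a b =
      ENNReal.ofReal (beta (a + s) b / beta a b) := by
  have hratio : 0 ≤ beta (a + s) b / beta a b := (div_pos (beta_pos has hb) (beta_pos ha hb)).le
  have hpdf (x : ℝ) : 0 ≤ betaPDFReal a b x := by
    by_cases hx : 0 < x ∧ x < 1
    · exact (betaPDFReal_pos hx.1 hx.2 ha hb).le
    · simp only [betaPDFReal, if_neg hx, le_refl]
  have hshift (x : ℝ) : betaPDF a b x * ENNReal.ofReal (x ^ s) =
      ENNReal.ofReal (beta (a + s) b / beta a b) * betaPDF (a + s) b x := by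
    rw [betaPDF, ← ENNReal.ofReal_mul (hpdf x), mul_comm, rpow_mul_betaPDFReal ha hb has,
      ENNReal.ofReal_mul hratio, betaPDF]
  rw [lintegral_betaMeasure (by fun_prop), lintegral_congr hshift,
    lintegral_const_mul _ (measurable_betaPDF _ _),
    lintegral_betaPDF_eq_one has hb, mul_one]

lemma lintegral_rpow_betaMeasure_le {a b s : ℝ} (ha : 0 < a) (hb : 0 < b) (hab : 2 ≤ a + b)
    (has : 0 < a + s) (hs : -1 < s) :
    ∫⁻ x, ENNReal.ofReal (x ^ s) ∂betaMeasure a b ≤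
      ENNReal.ofReal (2 * (Gamma (a + s) / Gamma a) * (a + b - 1) ^ (-s)) :=
  (lintegral_rpow_betaMeasure ha hb has).trans_le
    (ENNReal.ofReal_le_ofReal (beta_add_div_beta_le ha hb hab has hs))

lemma lintegral_betaMeasure_le_of_le_rpow_add_rpow {a b c d s t : ℝ} (ha : 0 < a) (hb : 0 < b)
    (hab : 2 ≤ a + b) (has : 0 < a + s) (hs : -1 < s) (hat : 0 < a + t) (ht : -1 < t)
    (hc : 0 ≤ c) (hd : 0 ≤ d) {f : ℝ → ENNReal}
    (hf : ∀ x ∈ Set.Ioo (0 : ℝ) 1, f x ≤ ENNReal.ofReal (c * x ^ s + d * x ^ t)) :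
    ∫⁻ x, f x ∂betaMeasure a b ≤
      ENNReal.ofReal (c * (2 * (Gamma (a + s) / Gamma a) * (a + b - 1) ^ (-s)) +
        d * (2 * (Gamma (a + t) / Gamma a) * (a + b - 1) ^ (-t))) := by
  have hbase : 0 < a + b - 1 := by linarith
  have hsplit {y z : ℝ} (hy : 0 ≤ y) (hz : 0 ≤ z) : ENNReal.ofReal (c * y + d * z) =
      ENNReal.ofReal c * ENNReal.ofReal y + ENNReal.ofReal d * ENNReal.ofReal z := by
    rw [ENNReal.ofReal_add (by positivity) (by positivity), ENNReal.ofReal_mul hc,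
      ENNReal.ofReal_mul hd]
  calc ∫⁻ x, f x ∂betaMeasure a b
      ≤ ∫⁻ x, ENNReal.ofReal c * ENNReal.ofReal (x ^ s) +
          ENNReal.ofReal d * ENNReal.ofReal (x ^ t) ∂betaMeasure a b :=
        lintegral_mono_ae <| (ae_betaMeasure_mem_Ioo a b).mono fun x hx =>
          (hf x hx).trans_eq (hsplit (rpow_nonneg hx.1.le s) (rpow_nonneg hx.1.le t))
    _ = ENNReal.ofReal c * ∫⁻ x, ENNReal.ofReal (x ^ s) ∂betaMeasure a b +
          ENNReal.ofReal d * ∫⁻ x, ENNReal.ofReal (x ^ t) ∂betaMeasure a b := by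
        rw [lintegral_add_left (by fun_prop), lintegral_const_mul _ (by fun_prop),
          lintegral_const_mul _ (by fun_prop)]
    _ ≤ _ := by
        rw [hsplit (by positivity) (by positivity)]
        gcongr
        · exact lintegral_rpow_betaMeasure_le ha hb hab has hs
        · exact lintegral_rpow_betaMeasure_le ha hb hab hat ht

lemma derivative_sum_Ico_bernsteinPolynomial (R : Type*) [CommRing R] {n k : ℕ} (hk : k ≤ n) :
    Polynomial.derivative (∑ i ∈ Finset.Ico (k + 1) (n + 1), bernsteinPolynomial R n i) =
      n * bernsteinPolynomial R (n - 1) k := by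
  have htop : n * bernsteinPolynomial R (n - 1) n = 0 := by
    rcases n.eq_zero_or_pos with rfl | hn
    · simp
    · rw [bernsteinPolynomial.eq_zero_of_lt R (Nat.sub_one_lt hn.ne'), mul_zero]
  have htelescope := Finset.sum_Ico_sub (fun i => n * bernsteinPolynomial R (n - 1) i) hk
  simp only [htop, zero_sub, ← mul_sub, ← Finset.mul_sum] at htelescope
  rw [Polynomial.derivative_sum, ← Finset.sum_Ico_add' _ k n 1]
  simp only [bernsteinPolynomial.derivative_succ, ← Finset.mul_sum]
  rw [← neg_inj, ← htelescope, ← mul_neg, ← Finset.sum_neg_distrib]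
  simp only [neg_sub]

lemma sum_Ico_eval_bernsteinPolynomial_eq_integral {n k : ℕ} (hk : k ≤ n) (p : ℝ) :
    ∑ i ∈ Finset.Ico (k + 1) (n + 1), (bernsteinPolynomial ℝ n i).eval p =
      ∫ x in (0 : ℝ)..p, n * (bernsteinPolynomial ℝ (n - 1) k).eval x := by
  set q := ∑ i ∈ Finset.Ico (k + 1) (n + 1), bernsteinPolynomial ℝ n i with hq
  have hderiv (x : ℝ) :
      HasDerivAt (fun x => q.eval x) (n * (bernsteinPolynomial ℝ (n - 1) k).eval x) x := by
    simpa [hq, derivative_sum_Ico_bernsteinPolynomial ℝ hk] using q.hasDerivAt x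
  have hzero : q.eval 0 = 0 := by
    rw [hq, Polynomial.eval_finsetSum]
    refine Finset.sum_eq_zero fun i hi => ?_
    rw [bernsteinPolynomial.eval_at_0, if_neg (by grind)]
  rw [← Polynomial.eval_finsetSum, intervalIntegral.integral_eq_sub_of_hasDerivAt
    (fun x _ => hderiv x) (Continuous.intervalIntegrable (by fun_prop) _ _), hzero, sub_zero]

lemma one_div_beta_natCast_add_one (k m : ℕ) :
    1 / beta (k + 1) (m + 1) = (k + m + 1 : ℕ) * (k + m).choose k := by
  have hchoose : ((k + m).choose k : ℝ) * k.factorial * m.factorial = (k + m).factorial :=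
    mod_cast Nat.choose_symm_add ▸ Nat.add_choose_mul_factorial_mul_factorial k m
  rw [beta, show (k + 1 + (m + 1) : ℝ) = ((k + m + 1 : ℕ) : ℝ) + 1 by push_cast; ring,
    Gamma_nat_eq_factorial, Gamma_nat_eq_factorial, Gamma_nat_eq_factorial, Nat.factorial_succ,
    Nat.cast_mul, ← hchoose]
  field_simp

lemma betaPDFReal_natCast_add_one (k m : ℕ) {x : ℝ} (hx : x ∈ Set.Ioo (0 : ℝ) 1) :
    betaPDFReal (k + 1) (m + 1) x =
      (k + m + 1 : ℕ) * (bernsteinPolynomial ℝ (k + m) k).eval x := by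
  rw [betaPDFReal, if_pos (show 0 < x ∧ x < 1 from hx), one_div_beta_natCast_add_one,
    add_sub_cancel_right, add_sub_cancel_right, rpow_natCast, rpow_natCast]
  simp [bernsteinPolynomial, mul_assoc]

lemma betaMeasure_Iio (a b p : ℝ) :
    betaMeasure a b (Set.Iio p) = ∫⁻ x in Set.Ioo 0 p, betaPDF a b x := by
  have hIoo : Set.Iio p =ᵐ[betaMeasure a b] Set.Ioo 0 p := by
    filter_upwards [ae_betaMeasure_mem_Ioo a b] with x hx
    exact propext (and_iff_right hx.1).symm
  rw [measure_congr hIoo, betaMeasure, withDensity_apply _ measurableSet_Ioo]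

lemma eval_bernsteinPolynomial_nonneg (n k : ℕ) {x : ℝ} (hx : x ∈ Set.Icc (0 : ℝ) 1) :
    0 ≤ (bernsteinPolynomial ℝ n k).eval x := by
  have hx0 := hx.1
  have hx1 : 0 ≤ 1 - x := sub_nonneg.2 hx.2
  simp only [bernsteinPolynomial, Polynomial.eval_mul, Polynomial.eval_natCast,
    Polynomial.eval_pow, Polynomial.eval_sub, Polynomial.eval_one, Polynomial.eval_X]
  positivity

lemma betaMeasure_natCast_add_one_Iio (k m : ℕ) {p : ℝ} (hp : p ∈ Set.Icc (0 : ℝ) 1) :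
    betaMeasure (k + 1) (m + 1) (Set.Iio p) = ENNReal.ofReal
      (∑ i ∈ Finset.Ico (k + 1) (k + m + 2), (bernsteinPolynomial ℝ (k + m + 1) i).eval p) := by
  set f := fun x : ℝ => (k + m + 1 : ℕ) * (bernsteinPolynomial ℝ (k + m) k).eval x
  have hint : IntegrableOn f (Set.Ioo 0 p) :=
    ((by fun_prop : Continuous f).integrableOn_Icc (a := 0) (b := p)).mono_set
      Set.Ioo_subset_Icc_self
  have hnonneg : 0 ≤ᵐ[volume.restrict (Set.Ioo 0 p)] f :=
    ae_restrict_of_forall_mem measurableSet_Ioo fun x hx => mul_nonneg (Nat.cast_nonneg _)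
      (eval_bernsteinPolynomial_nonneg _ _ ⟨hx.1.le, hx.2.le.trans hp.2⟩)
  rw [sum_Ico_eval_bernsteinPolynomial_eq_integral (by lia), Nat.add_sub_cancel,
    intervalIntegral.integral_of_le hp.1, integral_Ioc_eq_integral_Ioo,
    ofReal_integral_eq_lintegral_ofReal hint hnonneg, betaMeasure_Iio]
  refine setLIntegral_congr_fun measurableSet_Ioo fun x hx => ?_
  rw [betaPDF, betaPDFReal_natCast_add_one k m ⟨hx.1, hx.2.trans_le hp.2⟩]

lemma binomial_Ici (n k : ℕ) (p : unitInterval) :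
    binomial n p (Set.Ici k) =
      ENNReal.ofReal (∑ i ∈ Finset.Ico k (n + 1), (bernsteinPolynomial ℝ n i).eval (p : ℝ)) := by
  have hIco : Set.Ici k =ᵐ[binomial n p] Set.Ico k (n + 1) := by
    filter_upwards [ae_le_of_hasLaw_binomial HasLaw.id] with i hi
    exact propext (and_iff_left (Nat.lt_succ_of_le hi)).symm
  rw [measure_congr hIco, ← Finset.coe_Ico, ← sum_measure_singleton,
    ENNReal.ofReal_sum_of_nonneg fun i _ => eval_bernsteinPolynomial_nonneg n i p.2]
  refine Finset.sum_congr rfl fun i _ => ?_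
  rw [binomial_singleton]
  simp [bernsteinPolynomial]

lemma binomial_Ici_eq_betaMeasure_Iio {n k : ℕ} (hk : 1 ≤ k) (hkn : k ≤ n) (p : unitInterval) :
    binomial n p (Set.Ici k) = betaMeasure k (n - k + 1) (Set.Iio (p : ℝ)) := by
  obtain ⟨m, rfl⟩ := Nat.exists_eq_add_of_le hkn
  obtain ⟨k, rfl⟩ := Nat.exists_eq_add_of_le' hk
  have hcast : ((k + 1 + m : ℕ) : ℝ) - (k + 1 : ℕ) + 1 = m + 1 := by push_cast; ring
  rw [binomial_Ici, hcast, Nat.cast_add_one, betaMeasure_natCast_add_one_Iio k m p.2,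
    add_right_comm k]

section ProductMeasure

variable {ι X : Type*} [Fintype ι] [MeasurableSpace X] {S : Set X} [DecidablePred (· ∈ S)]

lemma measurable_card_filter_mem (hS : MeasurableSet S) :
    Measurable fun ω : ι → X => (Finset.univ.filter fun i => ω i ∈ S).card := by
  simp only [Finset.card_filter]
  exact Finset.measurable_fun_sum _ fun i _ =>
    Measurable.ite (measurable_pi_apply i hS) measurable_const measurable_const

variable (μ : Measure X) [IsProbabilityMeasure μ]

lemma pi_filter_mem_eq (hS : MeasurableSet S) (A : Finset ι) :
    Measure.pi (fun _ => μ) {ω : ι → X | (Finset.univ.filter fun i => ω i ∈ S) = A} =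
      ENNReal.ofReal (μ.real S ^ A.card * (1 - μ.real S) ^ (Fintype.card ι - A.card)) := by
  classical
  have hpi : {ω : ι → X | (Finset.univ.filter fun i => ω i ∈ S) = A} =
      Set.univ.pi fun i => if i ∈ A then S else Sᶜ := by
    ext ω
    simp only [Set.mem_ofPred_eq, Finset.ext_iff, Finset.mem_filter_univ, Set.mem_univ_pi]
    refine forall_congr' fun i => ?_
    split_ifs with hi <;> simp [hi]
  rw [hpi, Measure.pi_pi, ← probReal_compl_eq_one_sub hS, ENNReal.ofReal_mul (by positivity),
    ENNReal.ofReal_pow measureReal_nonneg, ENNReal.ofReal_pow measureReal_nonneg,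
    ofReal_measureReal, ofReal_measureReal]
  simp only [apply_ite μ, Finset.prod_ite, Finset.prod_const, Finset.filter_univ_mem,
    Finset.filter_notMem_eq_sdiff, ← Finset.compl_eq_univ_sdiff, Finset.card_compl]

lemma hasLaw_card_filter_mem (hS : MeasurableSet S) :
    HasLaw (fun ω : ι → X => (Finset.univ.filter fun i => ω i ∈ S).card)
      (binomial (Fintype.card ι) ⟨μ.real S, measureReal_nonneg, measureReal_le_one⟩)
      (Measure.pi fun _ => μ) := by
  classical
  refine ⟨(measurable_card_filter_mem hS).aemeasurable, Measure.ext_of_singleton fun k => ?_⟩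
  have hfiber : (fun ω : ι → X => (Finset.univ.filter fun i => ω i ∈ S).card) ⁻¹' {k} =
      ⋃ A ∈ Finset.univ.powersetCard k,
        {ω : ι → X | (Finset.univ.filter fun i => ω i ∈ S) = A} := by
    ext ω
    simp
  have hmeas (A : Finset ι) :
      MeasurableSet {ω : ι → X | (Finset.univ.filter fun i => ω i ∈ S) = A} := by
    simp only [Finset.ext_iff, Finset.mem_filter_univ]
    measurability
  rw [Measure.map_apply (measurable_card_filter_mem hS) (measurableSet_singleton k), hfiber,
    measure_biUnion_finset (fun A _ B _ hAB => Set.disjoint_left.2 fun ω hA hB =>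
      hAB (hA.symm.trans hB)) fun A _ => hmeas A, binomial_singleton]
  simp only [pi_filter_mem_eq μ hS]
  rw [Finset.sum_congr rfl fun A hA => by rw [(Finset.mem_powersetCard.1 hA).2],
    Finset.sum_const, Finset.card_powersetCard, Finset.card_univ, ← ENNReal.ofReal_nsmul,
    nsmul_eq_mul, mul_assoc]

end ProductMeasure

section Sample

variable (P : PMF ℕ)

lemma measureReal_toMeasure_singleton (j : ℕ) : P.toMeasure.real {j} = pReal P j := by
  rw [measureReal_def, P.toMeasure_apply_singleton j (measurableSet_singleton j), pReal]

lemma pReal_mem_unitInterval (j : ℕ) : pReal P j ∈ unitInterval := by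
  rw [← measureReal_toMeasure_singleton]
  exact ⟨measureReal_nonneg, measureReal_le_one⟩

lemma hasLaw_freq (n j : ℕ) :
    HasLaw (fun ω : Fin n → ℕ => freq ω j) (binomial n ⟨pReal P j, pReal_mem_unitInterval P j⟩)
      (sampleMeasure P n) := by
  simpa only [freq, sampleMeasure, measureReal_toMeasure_singleton, Set.mem_singleton_iff,
    Fintype.card_fin]
    using hasLaw_card_filter_mem (ι := Fin n) P.toMeasure (measurableSet_singleton j)

lemma finite_setOf_lt_pReal {x : ℝ} (hx : 0 < x) : {j | x < pReal P j}.Finite := by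
  have hsum : Summable (pReal P) := ENNReal.summable_toReal P.tsum_coe_ne_top
  refine (eventually_cofinite.1 (hsum.tendsto_cofinite_zero.eventually (gt_mem_nhds hx))).subset
    fun j hj => not_lt.2 (le_of_lt hj)

lemma tsum_indicator_Iio_pReal {x : ℝ} (hx : 0 < x) :
    ∑' j, (Set.Iio (pReal P j)).indicator (1 : ℝ → ENNReal) x = tailF P x := by
  have hswap (j : ℕ) : (Set.Iio (pReal P j)).indicator (1 : ℝ → ENNReal) x =
      {i | x < pReal P i}.indicator (fun _ => 1) j := rfl
  simp only [hswap]
  rw [← tsum_subtype, ENNReal.tsum_set_one, ← (finite_setOf_lt_pReal P hx).cast_ncard_eq,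
    ENat.toENNReal_coe, tailF]

lemma tsum_measure_Iio_pReal {ν : Measure ℝ} (hν : ∀ᵐ x ∂ν, 0 < x) :
    ∑' j, ν (Set.Iio (pReal P j)) = ∫⁻ x, tailF P x ∂ν := by
  have hmeas (j : ℕ) : AEMeasurable ((Set.Iio (pReal P j)).indicator (1 : ℝ → ENNReal)) ν :=
    (measurable_one.indicator measurableSet_Iio).aemeasurable
  simp only [← lintegral_indicator_one measurableSet_Iio]
  rw [← lintegral_tsum hmeas]
  refine lintegral_congr_ae ?_
  filter_upwards [hν] with x hx using tsum_indicator_Iio_pReal P hx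

lemma Ccount_nonneg {n : ℕ} (ω : Fin n → ℕ) (k : ℕ) : 0 ≤ Ccount ω k :=
  tsum_nonneg fun j => by split_ifs <;> simp

lemma freq_eq_zero_of_notMem_range {n j : ℕ} {ω : Fin n → ℕ} (hj : j ∉ Set.range ω) :
    freq ω j = 0 := by
  rw [freq, Finset.card_eq_zero, Finset.filter_eq_empty_iff]
  exact fun i _ hi => hj ⟨i, hi⟩

lemma ofReal_Ccount {n k : ℕ} (hk : 1 ≤ k) (ω : Fin n → ℕ) :
    ENNReal.ofReal (Ccount ω k) =
      ∑' j, {ω : Fin n → ℕ | k ≤ freq ω j}.indicator (1 : (Fin n → ℕ) → ENNReal) ω := by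
  have hsummable : Summable fun j => if k ≤ freq ω j then (1 : ℝ) else 0 :=
    summable_of_ne_finset_zero (s := Finset.univ.image ω) fun j hj => if_neg <| by
      rw [freq_eq_zero_of_notMem_range (by simpa using hj)]
      lia
  rw [Ccount, ENNReal.ofReal_tsum_of_nonneg (fun j => by split_ifs <;> simp) hsummable]
  refine tsum_congr fun j => ?_
  by_cases hj : k ≤ freq ω j <;> simp [hj]

lemma lintegral_ofReal_Ccount {n k : ℕ} (hk : 1 ≤ k) (hkn : k ≤ n) :
    ∫⁻ ω, ENNReal.ofReal (Ccount ω k) ∂sampleMeasure P n =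
      ∫⁻ x, tailF P x ∂betaMeasure k (n - k + 1) := by
  have hmeas (j : ℕ) : MeasurableSet {ω : Fin n → ℕ | k ≤ freq ω j} := .of_discrete
  have hprob (j : ℕ) : sampleMeasure P n {ω | k ≤ freq ω j} =
      betaMeasure k (n - k + 1) (Set.Iio (pReal P j)) := by
    rw [(hasLaw_freq P n j).measure_eq (p := (k ≤ ·)) .of_discrete]
    exact binomial_Ici_eq_betaMeasure_Iio hk hkn _
  simp only [ofReal_Ccount hk]
  rw [lintegral_tsum fun j => (measurable_one.indicator (hmeas j)).aemeasurable]
  simp only [lintegral_indicator_one (hmeas _), hprob]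
  exact tsum_measure_Iio_pReal P ((ae_betaMeasure_mem_Ioo _ _).mono fun x hx => hx.1)

lemma integral_Ccount {n k : ℕ} (hk : 1 ≤ k) (hkn : k ≤ n) :
    ∫ ω, Ccount ω k ∂sampleMeasure P n =
      (∫⁻ x, tailF P x ∂betaMeasure k (n - k + 1)).toReal := by
  rw [integral_eq_lintegral_of_nonneg_ae (ae_of_all _ fun ω => Ccount_nonneg ω k)
    (measurable_of_countable _).aestronglyMeasurable, lintegral_ofReal_Ccount P hk hkn]

end Sample

section SigmaClass

variable {α β L : ℝ} {P : PMF ℕ}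

lemma inSigmaClass.tailF_le {C C' x : ℝ} (hP : inSigmaClass α β C C' P L) (hC : 0 < C)
    (hx : x ∈ Set.Ioo (0 : ℝ) 1) : (tailF P x : ℝ) ≤ L * x ^ (-α) * (1 + C' * x ^ β) := by
  have hx0 : 0 < x := hx.1
  have hL : 0 < L := hC.trans_le hP.2.1
  have hdev : |(tailF P x : ℝ) / (L * x ^ (-α)) - 1| ≤ x ^ β * C' := by
    rw [← inv_mul_le_iff₀ (rpow_pos_of_pos hx0 β), ← rpow_neg hx0.le]
    exact hP.2.2 x hx
  rw [← div_le_iff₀' (by positivity)]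
  linarith [le_of_abs_le hdev]

lemma inSigmaClass.mono {C C' C'' : ℝ} (hP : inSigmaClass α β C C' P L) (h : C' ≤ C'') :
    inSigmaClass α β C C'' P L :=
  ⟨hP.1, hP.2.1, fun x hx => (hP.2.2 x hx).trans h⟩

end SigmaClass

theorem expected_Ccount_upper_bound_general
    {α β D L : ℝ} (hα : α < 1) (hβ : α - 1 < β) (hL : 0 ≤ L) (hD : 0 ≤ D) {P : PMF ℕ}
    (htail : ∀ x ∈ Set.Ioo (0 : ℝ) 1, (tailF P x : ℝ) ≤ L * x ^ (-α) * (1 + D * x ^ β))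
    {n k : ℕ} (hk : 1 ≤ k) (hkn : k ≤ n) :
    (∫ ω, Ccount ω k ∂sampleMeasure P n) ≤
      2 * (n : ℝ) ^ α * L * (Gamma (k - α) / Gamma k) *
        (1 + D * Gamma (k - α + β) / (Gamma (k - α) * (n : ℝ) ^ β)) := by
  have hk' : (1 : ℝ) ≤ k := mod_cast hk
  have hkn' : (k : ℝ) ≤ n := mod_cast hkn
  have hn : (0 : ℝ) < n := by linarith
  have hΓα : 0 < Gamma (k - α) := Gamma_pos_of_pos (by linarith)
  have hΓβ : 0 < Gamma (k - α + β) := Gamma_pos_of_pos (by linarith)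
  have hpow : ∀ x ∈ Set.Ioo (0 : ℝ) 1,
      (tailF P x : ENNReal) ≤ ENNReal.ofReal (L * x ^ (-α) + L * D * x ^ (-α + β)) := by
    intro x hx
    rw [← ENNReal.ofReal_natCast, rpow_add hx.1]
    exact ENNReal.ofReal_le_ofReal ((htail x hx).trans_eq (by ring))
  rw [integral_Ccount P hk hkn]
  refine ENNReal.toReal_le_of_le_ofReal (by positivity)
    ((lintegral_betaMeasure_le_of_le_rpow_add_rpow (by linarith) (by linarith) (by linarith)
      (by linarith) (by linarith) (by linarith) (by linarith) hL (mul_nonneg hL hD)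
      hpow).trans_eq (congrArg ENNReal.ofReal ?_))
  rw [show (k + (n - k + 1) - 1 : ℝ) = n by ring, neg_add, neg_neg, ← sub_eq_add_neg,
    ← sub_eq_add_neg, rpow_sub hn, ← add_assoc, ← sub_eq_add_neg]
  field_simp

/-- Uniform bound on the expected number of symbols observed at least `k` times, over the
second-order regularly varying class `Σ(α,β,C,C')`. -/
theorem expected_Ccount_upper_bound
    (α β C C' : ℝ) (hα : α ∈ Set.Ioo (0 : ℝ) 1) (hβ : 0 < β) (hC : 0 < C) (hC' : 0 < C')
    (P : PMF ℕ) (Lα : ℝ) (hP : inSigmaClass α β C C' P Lα)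
    (n k : ℕ) (hn : 1 ≤ n) (hk : 1 ≤ k) (hkn : k ≤ n) :
    (∫ ω, Ccount ω k ∂ sampleMeasure P n) ≤
      2 * (n : ℝ) ^ α * Lα * (Real.Gamma (k - α) / Real.Gamma k) *
        (1 + 3 * C' * Real.Gamma (k - α + β) / (Real.Gamma (k - α) * (n : ℝ) ^ β)) := by
  exact expected_Ccount_upper_bound_general hα.2 (by linarith [hα.2]) (hC.trans_le hP.2.1).le
    (by positivity) (fun _ hx => (hP.mono (by linarith)).tailF_le hC hx) hk hkn

end
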